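/- Let θ > 0 and let N be a geometric random variable on {0,1,2,...} with p_n := P(N=n) = (1-2^{-θ}) 2^{-θ n}. Let Y be an integrable real random variable and let (Δ_n)_{n≥0} be real random variables, with N independent of Y and of the family (Δ_n). Suppose there is a real sequence (a_n)_{n≥0} converging to a limit a ∈ ℝ such that E[Y] = a_{n₀}, E[Δ_n] = a_{n+n₀+1} - a_{n+n₀} for every n ≥ 0 (for a fixed integer n₀ ≥ 0), and Σ_{n=0}^∞ E[|Δ_n|] < ∞. Then the estimator Z = Y + Δ_N / p_N is integrable and E[Z] = a. -/

import Mathlib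

open MeasureTheory ProbabilityTheory Filter
open scoped BigOperators

/-- unbiasedness of the single-term randomized multilevel estimator.
`N` is geometric on `{0,1,2,...}` with `p_n = (1-2^{-θ})2^{-θn}`, independent of `Y` and of
the family `(Δ_n)`.  If `E[Y] = a_{n₀}`, `E[Δ_n] = a_{n+n₀+1} - a_{n+n₀}` with `a_n → a`,
and `Σ_n E|Δ_n| < ∞`, then `Z = Y + Δ_N / p_N` is integrable with `E[Z] = a`. -/
theorem stmt5 {Ω : Type*} [MeasureSpace Ω] [IsProbabilityMeasure (ℙ : Measure Ω)]
    (θ : ℝ) (hθ : 0 < θ)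
    (N : Ω → ℕ) (hNmeas : Measurable N)
    (p : ℕ → ℝ) (hp : ∀ n, p n = (1 - (2 : ℝ) ^ (-θ)) * (2 : ℝ) ^ (-θ * n))
    (hNgeom : ∀ n, (ℙ : Measure Ω) {ω | N ω = n} = ENNReal.ofReal (p n))
    (Y : Ω → ℝ) (Δ : ℕ → Ω → ℝ)
    (hindep : IndepFun N (fun ω => (Y ω, fun n => Δ n ω)) ℙ)
    (hYint : Integrable Y ℙ) (hΔint : ∀ n, Integrable (Δ n) ℙ)
    (a : ℕ → ℝ) (alim : ℝ) (ha : Tendsto a atTop (nhds alim))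
    (n₀ : ℕ)
    (hY : ∫ ω, Y ω = a n₀)
    (hΔ : ∀ n, ∫ ω, Δ n ω = a (n + n₀ + 1) - a (n + n₀))
    (hsum : Summable fun n => ∫ ω, |Δ n ω|) :
    Integrable (fun ω => Y ω + Δ (N ω) ω / p (N ω)) ℙ ∧
      ∫ ω, (Y ω + Δ (N ω) ω / p (N ω)) = alim := by
  have h2 : (2 : ℝ) ^ (-θ) < 1 := Real.rpow_lt_one_of_one_lt_of_neg (by norm_num) (by linarith)
  have hpos : ∀ n, 0 < p n := fun n => by
    rw [hp]
    exact mul_pos (by linarith) (Real.rpow_pos_of_pos (by norm_num) _)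
  have hA : ∀ n, MeasurableSet {ω | N ω = n} := fun n => hNmeas (measurableSet_singleton n)
  have key : ∀ (n : ℕ) (h : ℝ → ℝ), Measurable h →
      ∫ ω in {ω | N ω = n}, h (Δ n ω) = p n * ∫ ω, h (Δ n ω) := by
    intro n h hh
    have hi : IndepFun (fun ω => ({n} : Set ℕ).indicator (fun _ => (1 : ℝ)) (N ω))
        (fun ω => h (Δ n ω)) ℙ := by
      refine hindep.comp (φ := ({n} : Set ℕ).indicator (fun _ => (1 : ℝ)))
        (ψ := fun q : ℝ × (ℕ → ℝ) => h (q.2 n)) (measurable_of_countable _) ?_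
      exact hh.comp ((measurable_pi_apply n).comp measurable_snd)
    have hm := hi.integral_fun_mul_eq_mul_integral
      (((measurable_of_countable (({n} : Set ℕ).indicator (fun _ => (1 : ℝ)))).comp hNmeas).aestronglyMeasurable)
      ((hh.comp_aemeasurable (hΔint n).aemeasurable).aestronglyMeasurable)
    have e1 : (fun ω => ({n} : Set ℕ).indicator (fun _ => (1 : ℝ)) (N ω))
        = {ω | N ω = n}.indicator (fun _ => (1 : ℝ)) := by
      funext ω
      simp [Set.indicator]
    have e2 : ∫ ω, ({n} : Set ℕ).indicator (fun _ => (1 : ℝ)) (N ω) = p n := by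
      rw [e1, integral_indicator (hA n)]
      simp [Measure.real, hNgeom, (hpos n).le]
    rw [e2] at hm
    rw [← hm, ← integral_indicator (hA n)]
    congr 1
    funext ω
    by_cases hω : N ω = n <;> simp [Set.indicator, hω]
  have hU : (⋃ n, {ω | N ω = n}) = Set.univ := by
    ext ω
    simp
  have hdisj : Pairwise (Function.onFun Disjoint fun n => {ω | N ω = n}) := by
    intro i j hij
    refine Set.disjoint_left.2 fun ω h1 h2 => hij ?_
    exact h1.symm.trans h2
  have hval : ∀ n, ∫ ω in {ω | N ω = n}, Δ (N ω) ω / p (N ω) = a (n + n₀ + 1) - a (n + n₀) := by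
    intro n
    rw [setIntegral_congr_fun (g := fun ω => Δ n ω / p n) (hA n)
      (fun ω (hω : N ω = n) => by simp only [hω])]
    rw [key n (fun x => x / p n) (measurable_id.div_const _), integral_div, hΔ]
    field_simp [(hpos n).ne']
  have hnorm : ∀ n, ∫ ω in {ω | N ω = n}, ‖Δ (N ω) ω / p (N ω)‖ = ∫ ω, |Δ n ω| := by
    intro n
    rw [setIntegral_congr_fun (g := fun ω => |Δ n ω| / p n) (hA n)
      (fun ω (hω : N ω = n) => by
        simp only [hω, norm_div, Real.norm_eq_abs, abs_of_pos (hpos n)])]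
    rw [key n (fun x => |x| / p n) (measurable_id.abs.div_const _), integral_div]
    field_simp [(hpos n).ne']
  have hIn : ∀ n, IntegrableOn (fun ω => Δ (N ω) ω / p (N ω)) {ω | N ω = n} ℙ := by
    intro n
    refine (((hΔint n).div_const (p n)).integrableOn).congr_fun ?_ (hA n)
    intro ω (hω : N ω = n)
    simp only [hω]
  have hIU := integrableOn_iUnion_of_summable_integral_norm hIn
    (by simpa only [hnorm] using hsum)
  have hS := hasSum_integral_iUnion hA hdisj hIU
  rw [hU] at hIU hS
  rw [integrableOn_univ] at hIU
  rw [setIntegral_univ] at hS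
  refine ⟨hYint.add hIU, ?_⟩
  rw [integral_add hYint hIU, hY]
  simp only [hval] at hS
  have ht := hS.tendsto_sum_nat
  have htel : ∀ m, ∑ n ∈ Finset.range m, (a (n + n₀ + 1) - a (n + n₀)) = a (m + n₀) - a n₀ := by
    intro m
    have := Finset.sum_range_sub (fun n => a (n + n₀)) m
    simpa [add_right_comm] using this
  simp only [htel] at ht
  have ht' := ((tendsto_add_atTop_iff_nat n₀).2 ha).sub_const (a n₀)
  have := tendsto_nhds_unique ht ht'
  rw [this]
  ring
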